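/- Let V be a finite-dimensional real vector space and let Q be a quadratic form on V, with Clifford algebra Cl(Q) and canonical linear embedding ι : V → Cl(Q). Let u, v, w, x ∈ V be such that polar_Q vanishes on every pair among them, i.e. polar_Q(u,v) = polar_Q(u,w) = polar_Q(u,x) = polar_Q(v,w) = polar_Q(v,x) = polar_Q(w,x) = 0, where polar_Q(a,b) = Q(a+b) − Q(a) − Q(b). Then the trace of the ℝ-linear endomorphism y ↦ ι(u)·ι(v)·ι(w)·ι(x)·y of Cl(Q) (left multiplication by ι(u)·ι(v)·ι(w)·ι(x)) equals 0. -/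

import Mathlib

/-!
Let `α` be the grade involution of `Cl(Q)`. If `y` lies in the subalgebra generated by the vectors
orthogonal to `u`, then `ι u * y = α y * ι u`, while `α (ι u) = -ι u`. The trace `τ` of left
multiplication is cyclic and invariant under `α`, so
`τ (ι u * y) = τ (α y * ι u) = τ (ι u * α y) = τ (-α (ι u * y)) = -τ (ι u * y)`,
and hence `2 * τ (ι u * y) = 0`.
-/

section LeftRegularTrace

variable {R A B : Type*} [CommRing R] [Ring A] [Algebra R A] [Ring B] [Algebra R B]

theorem trace_mulLeft_mul_comm (a b : A) :
    LinearMap.trace R A (LinearMap.mulLeft R (a * b)) =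
      LinearMap.trace R A (LinearMap.mulLeft R (b * a)) := by
  rw [LinearMap.mulLeft_mul, LinearMap.mulLeft_mul]
  exact LinearMap.trace_mul_comm R _ _

theorem trace_mulLeft_neg (a : A) :
    LinearMap.trace R A (LinearMap.mulLeft R (-a)) =
      -LinearMap.trace R A (LinearMap.mulLeft R a) :=
  map_neg ((LinearMap.trace R A).comp (LinearMap.mul R A)) a

theorem trace_mulLeft_algEquiv (e : A ≃ₐ[R] B) (a : A) :
    LinearMap.trace R B (LinearMap.mulLeft R (e a)) =
      LinearMap.trace R A (LinearMap.mulLeft R a) := by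
  have mulLeft_eq_conj :
      LinearMap.mulLeft R (e a) = e.toLinearEquiv.conj (LinearMap.mulLeft R a) := by
    ext b
    simp [LinearEquiv.conj_apply]
  rw [mulLeft_eq_conj, LinearMap.trace_conj']

end LeftRegularTrace

section CliffordAlgebra

open CliffordAlgebra

variable {R M : Type*} [CommRing R] [AddCommGroup M] [Module R M] {Q : QuadraticForm R M}

/-- The subalgebra of `Cl(Q)` generated by the vectors orthogonal to `u`: the image of the Clifford
algebra of the orthogonal complement of `u`. -/
def orthogonalSubalgebra (Q : QuadraticForm R M) (u : M) : Subalgebra R (CliffordAlgebra Q) :=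
  Algebra.adjoin R (ι Q '' {v | QuadraticMap.polar Q u v = 0})

theorem ι_mem_orthogonalSubalgebra {u v : M} (huv : QuadraticMap.polar Q u v = 0) :
    ι Q v ∈ orthogonalSubalgebra Q u :=
  Algebra.subset_adjoin ⟨v, huv, rfl⟩

theorem ι_mul_eq_involute_mul_ι_of_mem_orthogonalSubalgebra {u : M} {y : CliffordAlgebra Q}
    (hy : y ∈ orthogonalSubalgebra Q u) :
    ι Q u * y = involute y * ι Q u := by
  induction hy using Algebra.adjoin_induction with
  | mem y hy =>
    obtain ⟨v, huv, rfl⟩ := hy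
    rw [involute_ι, neg_mul, ι_mul_ι_comm_of_isOrtho (QuadraticMap.isOrtho_polarBilin.mp huv)]
  | algebraMap r => rw [AlgHom.commutes, Algebra.commutes]
  | add y z _ _ ihy ihz => rw [mul_add, ihy, ihz, map_add, add_mul]
  | mul y z _ _ ihy ihz => rw [← mul_assoc, ihy, mul_assoc, ihz, map_mul, mul_assoc]

theorem trace_mulLeft_ι_mul_eq_neg_self {u : M} {y : CliffordAlgebra Q}
    (hy : y ∈ orthogonalSubalgebra Q u) :
    LinearMap.trace R (CliffordAlgebra Q) (LinearMap.mulLeft R (ι Q u * y)) =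
      -LinearMap.trace R (CliffordAlgebra Q) (LinearMap.mulLeft R (ι Q u * y)) := by
  let τ (a : CliffordAlgebra Q) : R := LinearMap.trace R _ (LinearMap.mulLeft R a)
  calc τ (ι Q u * y)
    _ = τ (involute y * ι Q u) := by rw [ι_mul_eq_involute_mul_ι_of_mem_orthogonalSubalgebra hy]
    _ = τ (ι Q u * involute y) := trace_mulLeft_mul_comm _ _
    _ = τ (-involute (ι Q u * y)) := by rw [map_mul, involute_ι, neg_mul, neg_neg]
    _ = -τ (involute (ι Q u * y)) := trace_mulLeft_neg _
    _ = -τ (ι Q u * y) := congrArg Neg.neg (trace_mulLeft_algEquiv involuteEquiv _)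

theorem stmt19_general [Module.Free R M] [Module.Finite R M] (h_two : IsLeftRegular (2 : R))
    {u : M} {y : CliffordAlgebra Q} (hy : y ∈ orthogonalSubalgebra Q u) :
    LinearMap.trace R (CliffordAlgebra Q) (LinearMap.mulLeft R (ι Q u * y)) = 0 := by
  rw [← h_two.mul_left_eq_zero_iff, two_mul]
  exact eq_neg_iff_add_eq_zero.mp (trace_mulLeft_ι_mul_eq_neg_self hy)

end CliffordAlgebra

theorem stmt19 (V : Type*) [AddCommGroup V] [Module ℝ V] [FiniteDimensional ℝ V]
    (Q : QuadraticForm ℝ V) (u v w x : V)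
    (huv : QuadraticMap.polar Q u v = 0) (huw : QuadraticMap.polar Q u w = 0)
    (hux : QuadraticMap.polar Q u x = 0) (hvw : QuadraticMap.polar Q v w = 0)
    (hvx : QuadraticMap.polar Q v x = 0) (hwx : QuadraticMap.polar Q w x = 0) :
    LinearMap.trace ℝ (CliffordAlgebra Q)
        (LinearMap.mulLeft ℝ
          (CliffordAlgebra.ι Q u * CliffordAlgebra.ι Q v * CliffordAlgebra.ι Q w *
            CliffordAlgebra.ι Q x)) = 0 := by
  simpa only [mul_assoc] using stmt19_general (IsRegular.of_ne_zero two_ne_zero).left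
    (mul_mem (mul_mem (ι_mem_orthogonalSubalgebra huv) (ι_mem_orthogonalSubalgebra huw))
      (ι_mem_orthogonalSubalgebra hux))
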